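/- Let $n \geq 2$, let $\alpha_1,\dots,\alpha_n$ be integers with $\alpha_j \geq 3$, set $\alpha_{\max} = \max\{\alpha_1,\dots,\alpha_n\}$, let $m \geq 3$ be an integer, and let $\gamma \geq \alpha_{\max}$. Then there is a constant $C$ such that for all $y, z \in \mathbb{R}^n$ with $\|y\|_m^m \neq \|z\|_m^m$, $\left| \int_{\mathbb{S}^{n-1}} e^{i\left[x_1^{\alpha_1}(y_1^m - z_1^m) + \cdots + x_n^{\alpha_n}(y_n^m - z_n^m)\right]} d\sigma(x) \right| \leq C \left| \|y\|_m^m - \|z\|_m^m \right|^{-1/\gamma}$. -/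

import Mathlib

open MeasureTheory
open scoped ENNReal

/-!
On the sphere `1 = ∑ i, x i ^ 2`, so it suffices to bound the integral with amplitude `x q ^ 2`.
Hausdorff measure on the sphere is invariant under the rotations of the `(p, q)`-coordinate plane,
so that integral is an average of integrals over circles, on each of which the phase is, up to a
constant, a linear functional of the curve `((r cos t) ^ α p, (r sin t) ^ α q)`.

For `r = 1`, no nonzero functional of this curve has all of its derivatives of orders
`1, …, max (α p) (α q)` vanishing at a point: an analytic function has a nonzero derivative of
order one more than the vanishing order of its derivative, which is computed from the factor
`sin t * cos t`. By compactness the nonvanishing is uniform, and van der Corput's lemma gives the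
decay with exponent `1 / γ`. For `r < 1` rescaling costs a factor `r⁻¹`, which the amplitude
`(r sin t) ^ 2` absorbs. Choosing `p` or `q` to be the largest frequency
`y j ^ m - z j ^ m` finishes the proof, since `|‖y‖ₘᵐ - ‖z‖ₘᵐ|` is at most a constant times it.
-/

section VanDerCorput

open Set

theorem norm_integral_smul_le_of_norm_integral_le {E : Type*} [NormedAddCommGroup E]
    [NormedSpace ℝ E] [CompleteSpace E] {f : ℝ → E} {ψ ψ' : ℝ → ℝ} {a b B : ℝ} (hab : a ≤ b)
    (hf : Continuous f) (hψ : ∀ t ∈ Icc a b, HasDerivAt ψ (ψ' t) t)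
    (hψ' : ContinuousOn ψ' (Icc a b)) (hB : ∀ s ∈ Icc a b, ‖∫ t in a..s, f t‖ ≤ B) :
    ‖∫ t in a..b, ψ t • f t‖ ≤ B * (|ψ b| + ∫ t in a..b, |ψ' t|) := by
  set F : ℝ → E := fun s => ∫ t in a..s, f t with hF
  rw [← uIcc_of_le hab] at hψ hψ'
  have parts : ∫ t in a..b, ψ t • f t = ψ b • F b - ∫ t in a..b, ψ' t • F t := by
    rw [intervalIntegral.integral_smul_deriv_eq_deriv_smul hψ
      (fun t _ => hf.integral_hasStrictDerivAt a t |>.hasDerivAt) hψ'.intervalIntegrable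
      (hf.intervalIntegrable a b)]
    simp only [hF, intervalIntegral.integral_same, smul_zero, sub_zero]
  have boundary : ‖ψ b • F b‖ ≤ B * |ψ b| := by
    rw [norm_smul, mul_comm, Real.norm_eq_abs]
    gcongr
    exact hB b ⟨hab, le_rfl⟩
  have remainder : ‖∫ t in a..b, ψ' t • F t‖ ≤ B * ∫ t in a..b, |ψ' t| := by
    rw [← intervalIntegral.integral_const_mul]
    refine intervalIntegral.norm_integral_le_of_norm_le hab (ae_of_all _ fun t ht => ?_)
      (hψ'.abs.intervalIntegrable.const_mul B)
    rw [norm_smul, mul_comm, Real.norm_eq_abs]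
    gcongr
    exact hB t (Ioc_subset_Icc_self ht)
  calc ‖∫ t in a..b, ψ t • f t‖ ≤ ‖ψ b • F b‖ + ‖∫ t in a..b, ψ' t • F t‖ := by
        rw [parts]; exact norm_sub_le _ _
    _ ≤ B * (|ψ b| + ∫ t in a..b, |ψ' t|) := by rw [mul_add]; exact add_le_add boundary remainder

theorem integral_abs_deriv_eq_of_deriv_nonneg_or_nonpos {ψ ψ' : ℝ → ℝ} {a b : ℝ} (hab : a ≤ b)
    (hψ : ∀ t ∈ Icc a b, HasDerivAt ψ (ψ' t) t) (hψ' : ContinuousOn ψ' (Icc a b))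
    (hsign : (∀ t ∈ Icc a b, 0 ≤ ψ' t) ∨ ∀ t ∈ Icc a b, ψ' t ≤ 0) :
    ∫ t in a..b, |ψ' t| = |ψ b - ψ a| := by
  rw [← uIcc_of_le hab] at hψ hψ' hsign
  rw [← intervalIntegral.integral_eq_sub_of_hasDerivAt hψ hψ'.intervalIntegrable]
  rcases hsign with h | h
  · rw [intervalIntegral.integral_congr fun t ht => abs_of_nonneg (h t ht), abs_of_nonneg]
    exact intervalIntegral.integral_nonneg hab fun t ht => h t (uIcc_of_le hab ▸ ht)
  · rw [intervalIntegral.integral_congr fun t ht => abs_of_nonpos (h t ht), ← abs_neg,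
      ← intervalIntegral.integral_neg, abs_of_nonneg]
    exact intervalIntegral.integral_nonneg hab fun t ht =>
      neg_nonneg.2 (h t (uIcc_of_le hab ▸ ht))

theorem norm_integral_deriv_mul_exp_le {φ φ' : ℝ → ℝ} (hφ : ∀ t, HasDerivAt φ (φ' t) t)
    (hφ' : Continuous φ') (a b : ℝ) :
    ‖∫ t in a..b, φ' t • Complex.exp (Complex.I * φ t)‖ ≤ 2 := by
  have hcont : Continuous φ := continuous_iff_continuousAt.2 fun t => (hφ t).continuousAt
  have hderiv (t : ℝ) : HasDerivAt (fun t => -Complex.I * Complex.exp (Complex.I * φ t))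
      (φ' t • Complex.exp (Complex.I * φ t)) t := by
    refine (((hφ t).ofReal_comp.const_mul Complex.I).cexp.const_mul (-Complex.I)).congr_deriv ?_
    rw [Complex.real_smul]
    linear_combination (-Complex.exp (Complex.I * φ t) * φ' t) * Complex.I_sq
  rw [intervalIntegral.integral_eq_sub_of_hasDerivAt (fun t _ => hderiv t)
    (Continuous.intervalIntegrable (by fun_prop) a b)]
  refine (norm_sub_le _ _).trans_eq ?_
  simp only [norm_mul, norm_neg, Complex.norm_I, Complex.norm_exp_I_mul_ofReal]
  norm_num

variable {φ : ℝ → ℝ} {a b δ : ℝ}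

theorem hasDerivAt_iteratedDeriv {E : Type*} [NormedAddCommGroup E] [NormedSpace ℝ E] {u : ℝ → E}
    {k n : ℕ} (hu : ContDiff ℝ n u) (hk : k < n) (t : ℝ) :
    HasDerivAt (iteratedDeriv k u) (iteratedDeriv (k + 1) u t) t := by
  rw [iteratedDeriv_succ]
  exact (hu.differentiable_iteratedDeriv k (mod_cast hk) t).hasDerivAt

theorem hasDerivAt_inv_deriv (hφ : ContDiff ℝ 2 φ) {t : ℝ} (ht : deriv φ t ≠ 0) :
    HasDerivAt (fun s => (deriv φ s)⁻¹) (-iteratedDeriv 2 φ t / deriv φ t ^ 2) t := by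
  have h := hasDerivAt_iteratedDeriv (k := 1) (n := 2) hφ one_lt_two t
  rw [iteratedDeriv_one] at h
  exact h.inv ht

theorem continuousOn_deriv_inv_deriv (hφ : ContDiff ℝ 2 φ) {s : Set ℝ}
    (hs : ∀ t ∈ s, deriv φ t ≠ 0) :
    ContinuousOn (fun t => -iteratedDeriv 2 φ t / deriv φ t ^ 2) s :=
  ((hφ.continuous_iteratedDeriv 2 le_rfl).neg.continuousOn.div
    ((hφ.continuous_deriv one_le_two).pow 2).continuousOn fun t ht => pow_ne_zero 2 (hs t ht))

theorem ne_zero_of_le_abs {x : ℝ} (hδ : 0 < δ) (hx : δ ≤ |x|) : x ≠ 0 :=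
  abs_pos.1 (hδ.trans_le hx)

theorem norm_integral_exp_le_of_le_abs_deriv (hφ : ContDiff ℝ 2 φ) (hab : a ≤ b) (hδ : 0 < δ)
    (h : ∀ t ∈ Icc a b, δ ≤ |deriv φ t|) :
    ‖∫ t in a..b, Complex.exp (Complex.I * φ t)‖ ≤
      2 * (δ⁻¹ + ∫ t in a..b, |-iteratedDeriv 2 φ t / deriv φ t ^ 2|) := by
  have hne (t) (ht : t ∈ Icc a b) : deriv φ t ≠ 0 := ne_zero_of_le_abs hδ (h t ht)
  have hcont : Continuous φ := hφ.continuous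
  have hcont' : Continuous (deriv φ) := hφ.continuous_deriv one_le_two
  calc ‖∫ t in a..b, Complex.exp (Complex.I * φ t)‖
      = ‖∫ t in a..b, (deriv φ t)⁻¹ • deriv φ t • Complex.exp (Complex.I * φ t)‖ := by
        congr 1
        refine intervalIntegral.integral_congr fun t ht => ?_
        exact (inv_smul_smul₀ (hne t (uIcc_of_le hab ▸ ht)) _).symm
    _ ≤ 2 * (|(deriv φ b)⁻¹| + ∫ t in a..b, |-iteratedDeriv 2 φ t / deriv φ t ^ 2|) :=
        norm_integral_smul_le_of_norm_integral_le hab (by fun_prop)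
          (fun t ht => hasDerivAt_inv_deriv hφ (hne t ht)) (continuousOn_deriv_inv_deriv hφ hne)
          fun s _ => norm_integral_deriv_mul_exp_le
            (fun t => (hφ.differentiable two_ne_zero t).hasDerivAt) hcont' a s
    _ ≤ 2 * (δ⁻¹ + ∫ t in a..b, |-iteratedDeriv 2 φ t / deriv φ t ^ 2|) := by
        rw [abs_inv]
        gcongr
        exact h b ⟨hab, le_rfl⟩

theorem norm_integral_exp_le_of_deriv_monotone (hφ : ContDiff ℝ 2 φ) (hab : a ≤ b) (hδ : 0 < δ)
    (h : ∀ t ∈ Icc a b, δ ≤ |deriv φ t|)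
    (hsign : (∀ t ∈ Icc a b, 0 ≤ iteratedDeriv 2 φ t) ∨
      ∀ t ∈ Icc a b, iteratedDeriv 2 φ t ≤ 0) :
    ‖∫ t in a..b, Complex.exp (Complex.I * φ t)‖ ≤ 6 * δ⁻¹ := by
  have hne (t) (ht : t ∈ Icc a b) : deriv φ t ≠ 0 := ne_zero_of_le_abs hδ (h t ht)
  have hinv (t) (ht : t ∈ Icc a b) : |(deriv φ t)⁻¹| ≤ δ⁻¹ := by
    rw [abs_inv]
    exact inv_anti₀ hδ (h t ht)
  have hsign' : (∀ t ∈ Icc a b, 0 ≤ -iteratedDeriv 2 φ t / deriv φ t ^ 2) ∨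
      ∀ t ∈ Icc a b, -iteratedDeriv 2 φ t / deriv φ t ^ 2 ≤ 0 :=
    hsign.symm.imp
      (fun H t ht => div_nonneg (neg_nonneg.2 (H t ht)) (sq_nonneg _))
      (fun H t ht => div_nonpos_of_nonpos_of_nonneg (neg_nonpos.2 (H t ht)) (sq_nonneg _))
  have hvar := integral_abs_deriv_eq_of_deriv_nonneg_or_nonpos hab
    (fun t ht => hasDerivAt_inv_deriv hφ (hne t ht)) (continuousOn_deriv_inv_deriv hφ hne) hsign'
  have hsub := abs_sub (deriv φ b)⁻¹ (deriv φ a)⁻¹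
  have hbound := norm_integral_exp_le_of_le_abs_deriv hφ hab hδ h
  rw [hvar] at hbound
  linarith [hinv a ⟨le_rfl, hab⟩, hinv b ⟨hab, le_rfl⟩]

theorem norm_integral_exp_le_of_abs_iteratedDeriv_two_le {N : ℝ} (hφ : ContDiff ℝ 2 φ)
    (hab : a ≤ b) (hδ : 0 < δ) (h : ∀ t ∈ Icc a b, δ ≤ |deriv φ t|)
    (hN : ∀ t ∈ Icc a b, |iteratedDeriv 2 φ t| ≤ N) :
    ‖∫ t in a..b, Complex.exp (Complex.I * φ t)‖ ≤ 2 * (δ⁻¹ + N / δ ^ 2 * (b - a)) := by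
  refine (norm_integral_exp_le_of_le_abs_deriv hφ hab hδ h).trans ?_
  have hpt (t) (ht : t ∈ uIoc a b) : ‖|-iteratedDeriv 2 φ t / deriv φ t ^ 2|‖ ≤ N / δ ^ 2 := by
    have ht' : t ∈ Icc a b := Ioc_subset_Icc_self (uIoc_of_le hab ▸ ht)
    have hN0 : 0 ≤ N := (abs_nonneg _).trans (hN t ht')
    rw [Real.norm_eq_abs, abs_abs, abs_div, abs_neg, abs_pow]
    gcongr
    exacts [hN t ht', h t ht']
  have hint := intervalIntegral.norm_integral_le_of_norm_le_const hpt
  rw [abs_of_nonneg (sub_nonneg.2 hab)] at hint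
  gcongr
  exact (Real.le_norm_self _).trans hint

theorem nonneg_or_nonpos_of_forall_ne_zero {X : Type*} [TopologicalSpace X] {s : Set X} {f : X → ℝ}
    (hs : IsPreconnected s) (hf : ContinuousOn f s) (hne : ∀ x ∈ s, f x ≠ 0) :
    (∀ x ∈ s, 0 ≤ f x) ∨ ∀ x ∈ s, f x ≤ 0 := by
  by_contra! hcon
  obtain ⟨⟨x, hx, hfx⟩, y, hy, hfy⟩ := hcon
  obtain ⟨z, hz, hfz⟩ := hs.intermediate_value hx hy hf ⟨hfx.le, hfy.le⟩
  exact hne z hz hfz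

theorem exists_forall_abs_sub_le_abs {X : Type*} [TopologicalSpace X] {s : Set X} {f : X → ℝ}
    (hs : IsPreconnected s) (hsc : IsCompact s) (hs0 : s.Nonempty) (hf : ContinuousOn f s) :
    ∃ x₀ ∈ s, ∀ x ∈ s, |f x - f x₀| ≤ |f x| := by
  by_cases hzero : ∃ x₀ ∈ s, f x₀ = 0
  · obtain ⟨x₀, hx₀, h0⟩ := hzero
    exact ⟨x₀, hx₀, fun x _ => by rw [h0, sub_zero]⟩
  push Not at hzero
  obtain ⟨x₀, hx₀, hmin⟩ := hsc.exists_isMinOn hs0 hf.abs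
  refine ⟨x₀, hx₀, fun x hx => ?_⟩
  have hle : |f x₀| ≤ |f x| := hmin hx
  rcases nonneg_or_nonpos_of_forall_ne_zero hs hf hzero with h | h
  · rw [abs_of_nonneg (h x hx), abs_of_nonneg (h x₀ hx₀)] at hle
    rw [abs_of_nonneg (h x hx), abs_of_nonneg (sub_nonneg.2 hle)]
    linarith [h x₀ hx₀]
  · rw [abs_of_nonpos (h x hx), abs_of_nonpos (h x₀ hx₀)] at hle
    rw [abs_of_nonpos (h x hx), abs_of_nonpos (by linarith)]
    linarith [h x₀ hx₀]

theorem mul_abs_sub_le_abs_sub_of_le_abs_deriv {f f' : ℝ → ℝ} {s t c : ℝ}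
    (hf : ∀ x ∈ uIcc s t, HasDerivAt f (f' x) x) (hc : ∀ x ∈ uIcc s t, c ≤ |f' x|) :
    c * |t - s| ≤ |f t - f s| := by
  wlog hst : s < t generalizing s t
  · rcases (not_lt.1 hst).eq_or_lt with rfl | hts
    · simp only [sub_self, abs_zero, mul_zero, le_refl]
    · rw [abs_sub_comm, abs_sub_comm (f t)]
      exact this (uIcc_comm s t ▸ hf) (uIcc_comm s t ▸ hc) hts
  rw [uIcc_of_le hst.le] at hf hc
  obtain ⟨x, hx, hslope⟩ := exists_hasDerivAt_eq_slope f f' hst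
    (fun x hx => (hf x hx).continuousAt.continuousWithinAt)
    (fun x hx => hf x (Ioo_subset_Icc_self hx))
  have hpos : 0 < t - s := sub_pos.2 hst
  calc c * |t - s| ≤ |f' x| * |t - s| := by gcongr; exact hc x (Ioo_subset_Icc_self hx)
    _ = |f t - f s| := by rw [← abs_mul, hslope, div_mul_cancel₀ _ hpos.ne']

theorem exists_forall_mul_abs_sub_le_abs {f f' : ℝ → ℝ} {c : ℝ} (hab : a ≤ b)
    (hf : ∀ t ∈ Icc a b, HasDerivAt f (f' t) t) (hc : ∀ t ∈ Icc a b, c ≤ |f' t|) :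
    ∃ t₀ ∈ Icc a b, ∀ t ∈ Icc a b, c * |t - t₀| ≤ |f t| := by
  obtain ⟨t₀, ht₀, h⟩ := exists_forall_abs_sub_le_abs isPreconnected_Icc isCompact_Icc
    (nonempty_Icc.2 hab) fun t ht => (hf t ht).continuousAt.continuousWithinAt
  refine ⟨t₀, ht₀, fun t ht => le_trans ?_ (h t ht)⟩
  have hsub : uIcc t₀ t ⊆ Icc a b := uIcc_subset_Icc ht₀ ht
  exact mul_abs_sub_le_abs_sub_of_le_abs_deriv (fun x hx => hf x (hsub hx))
    fun x hx => hc x (hsub hx)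

section Excision

variable {E : Type*} [NormedAddCommGroup E] [NormedSpace ℝ E] {f : ℝ → E}

theorem norm_integral_le_sub (hf : ∀ t, ‖f t‖ ≤ 1) (hab : a ≤ b) : ‖∫ t in a..b, f t‖ ≤ b - a := by
  have h := intervalIntegral.norm_integral_le_of_norm_le_const (a := a) (b := b) fun t _ => hf t
  rwa [one_mul, abs_of_nonneg (sub_nonneg.2 hab)] at h

theorem norm_integral_le_add_of_excision {t₀ η B : ℝ} (hf : Continuous f) (hf1 : ∀ t, ‖f t‖ ≤ 1)
    (ht₀ : t₀ ∈ Icc a b) (hη : 0 ≤ η) (hB : 0 ≤ B)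
    (h : ∀ c d, a ≤ c → c ≤ d → d ≤ b → (∀ t ∈ Icc c d, η ≤ |t - t₀|) →
      ‖∫ t in c..d, f t‖ ≤ B) :
    ‖∫ t in a..b, f t‖ ≤ 2 * η + 2 * B := by
  have hint (c d : ℝ) : IntervalIntegrable f volume c d := hf.intervalIntegrable c d
  obtain ⟨hat₀, ht₀b⟩ := ht₀
  have left : ‖∫ t in a..t₀, f t‖ ≤ η + B := by
    rcases le_total (t₀ - η) a with hnear | hfar
    · linarith [norm_integral_le_sub hf1 hat₀]
    have houter := h a (t₀ - η) le_rfl hfar (by linarith) fun t ht => by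
      rw [abs_sub_comm]; exact le_abs.2 (.inl (by linarith [ht.2]))
    have hinner := norm_integral_le_sub hf1 (show t₀ - η ≤ t₀ by linarith)
    rw [← intervalIntegral.integral_add_adjacent_intervals (hint a (t₀ - η)) (hint _ t₀)]
    exact (norm_add_le _ _).trans (by linarith)
  have right : ‖∫ t in t₀..b, f t‖ ≤ η + B := by
    rcases le_total b (t₀ + η) with hnear | hfar
    · linarith [norm_integral_le_sub hf1 ht₀b]
    have houter := h (t₀ + η) b (by linarith) hfar le_rfl fun t ht =>
      le_abs.2 (.inl (by linarith [ht.1]))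
    have hinner := norm_integral_le_sub hf1 (show t₀ ≤ t₀ + η by linarith)
    rw [← intervalIntegral.integral_add_adjacent_intervals (hint t₀ (t₀ + η)) (hint _ b)]
    exact (norm_add_le _ _).trans (by linarith)
  rw [← intervalIntegral.integral_add_adjacent_intervals (hint a t₀) (hint t₀ b)]
  exact (norm_add_le _ _).trans (by linarith)

theorem mul_rpow_neg_inv_succ_rpow {x : ℝ} (hx : 0 < x) {k : ℕ} (hk : k ≠ 0) :
    (x * x ^ (-(1 / ((k + 1 : ℕ) : ℝ)))) ^ (-(1 / (k : ℝ))) = x ^ (-(1 / ((k + 1 : ℕ) : ℝ))) := by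
  nth_rw 1 [← Real.rpow_one x]
  rw [← Real.rpow_add hx, ← Real.rpow_mul hx.le]
  congr 1
  push_cast
  field_simp
  ring

theorem norm_integral_le_of_forall_level {g g' : ℝ → ℝ} {c l : ℝ} {k : ℕ} (hk : k ≠ 0)
    (hf : Continuous f) (hf1 : ∀ t, ‖f t‖ ≤ 1) (hab : a ≤ b) (hl : 0 < l) (hc : 0 ≤ c)
    (hg : ∀ t ∈ Icc a b, HasDerivAt g (g' t) t) (hg' : ∀ t ∈ Icc a b, l ≤ |g' t|)
    (hlevel : ∀ a' b' δ, a ≤ a' → a' ≤ b' → b' ≤ b → 0 < δ → (∀ t ∈ Icc a' b', δ ≤ |g t|) →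
      ‖∫ t in a'..b', f t‖ ≤ c * δ ^ (-(1 / (k : ℝ)))) :
    ‖∫ t in a..b, f t‖ ≤ (2 + 2 * c) * l ^ (-(1 / ((k + 1 : ℕ) : ℝ))) := by
  set η := l ^ (-(1 / ((k + 1 : ℕ) : ℝ))) with hη
  have hη0 : 0 < η := Real.rpow_pos_of_pos hl _
  obtain ⟨t₀, ht₀, hlin⟩ := exists_forall_mul_abs_sub_le_abs hab hg hg'
  have houter (a' b') (ha : a ≤ a') (hab' : a' ≤ b') (hb : b' ≤ b)
      (hfar : ∀ t ∈ Icc a' b', η ≤ |t - t₀|) : ‖∫ t in a'..b', f t‖ ≤ c * η := by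
    rw [hη, ← mul_rpow_neg_inv_succ_rpow hl hk]
    refine hlevel a' b' (l * η) ha hab' hb (by positivity) fun t ht => ?_
    exact (mul_le_mul_of_nonneg_left (hfar t ht) hl.le).trans
      (hlin t ⟨ha.trans ht.1, ht.2.trans hb⟩)
  refine (norm_integral_le_add_of_excision hf hf1 ht₀ hη0.le (by positivity) houter).trans_eq ?_
  ring

end Excision

theorem norm_integral_exp_le_of_le_abs_iteratedDeriv {k : ℕ} (hk : 2 ≤ k) {φ : ℝ → ℝ}
    (hφ : ContDiff ℝ k φ) {a b l : ℝ} (hab : a ≤ b) (hl : 0 < l)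
    (h : ∀ t ∈ Icc a b, l ≤ |iteratedDeriv k φ t|) :
    ‖∫ t in a..b, Complex.exp (Complex.I * φ t)‖ ≤ (2 ^ (k + 2) - 2) * l ^ (-(1 / (k : ℝ))) := by
  have hnorm (φ : ℝ → ℝ) (t : ℝ) : ‖Complex.exp (Complex.I * φ t)‖ ≤ 1 :=
    (Complex.norm_exp_I_mul_ofReal _).le
  induction k, hk using Nat.le_induction generalizing a b l with
  | base =>
    have hcont := hφ.continuous
    have hsign := nonneg_or_nonpos_of_forall_ne_zero isPreconnected_Icc
      (hφ.continuous_iteratedDeriv 2 le_rfl).continuousOn fun t ht => ne_zero_of_le_abs hl (h t ht)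
    have hstep := norm_integral_le_of_forall_level (k := 1) (c := 6) one_ne_zero (by fun_prop)
      (hnorm φ) hab hl (by norm_num)
      (fun t _ => hasDerivAt_iteratedDeriv (k := 1) hφ one_lt_two t) h
      fun a' b' δ ha hab' hb hδ hlevel => by
        have hsub : Icc a' b' ⊆ Icc a b := Icc_subset_Icc ha hb
        rw [Nat.cast_one, div_one, Real.rpow_neg_one]
        exact norm_integral_exp_le_of_deriv_monotone hφ hab' hδ
          (by simpa only [iteratedDeriv_one] using hlevel)
          (hsign.imp (fun H t ht => H t (hsub ht)) fun H t ht => H t (hsub ht))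
    norm_num at hstep ⊢
    exact hstep
  | succ k hk ih =>
    have hcont := hφ.continuous
    have hpow : (2 : ℝ) ^ 2 ≤ 2 ^ (k + 2) := pow_le_pow_right₀ one_le_two (by lia)
    have hstep := norm_integral_le_of_forall_level (k := k) (c := 2 ^ (k + 2) - 2) (by lia)
      (by fun_prop) (hnorm φ) hab hl (by linarith)
      (fun t _ => hasDerivAt_iteratedDeriv hφ k.lt_succ_self t) h
      fun a' b' δ _ hab' _ hδ hlevel =>
        ih (hφ.of_le (mod_cast k.le_succ)) hab' hδ hlevel
    convert hstep using 2
    ring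

theorem norm_integral_exp_le_of_le_abs_iteratedDeriv_of_abs_iteratedDeriv_two_le {k : ℕ}
    (hk : k ≠ 0) {φ : ℝ → ℝ} (hφ : ContDiff ℝ (max k 2 : ℕ) φ) {a b l M : ℝ} (hab : a ≤ b)
    (hl : 0 < l) (hM : 0 ≤ M) (h : ∀ t ∈ Icc a b, l ≤ |iteratedDeriv k φ t|)
    (h2 : ∀ t ∈ Icc a b, |iteratedDeriv 2 φ t| ≤ M * l) :
    ‖∫ t in a..b, Complex.exp (Complex.I * φ t)‖ ≤
      (2 ^ (k + 2) + 2 * M * (b - a)) * l ^ (-(1 / (k : ℝ))) := by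
  have hlen : 0 ≤ b - a := sub_nonneg.2 hab
  rcases lt_or_ge k 2 with hk2 | hk2
  · obtain rfl : k = 1 := by lia
    rw [iteratedDeriv_one] at h
    have hfirst := norm_integral_exp_le_of_abs_iteratedDeriv_two_le
      (hφ.of_le (mod_cast le_max_right 1 2)) hab hl h h2
    calc ‖∫ t in a..b, Complex.exp (Complex.I * φ t)‖
        ≤ 2 * (l⁻¹ + M * l / l ^ 2 * (b - a)) := hfirst
      _ = (2 + 2 * M * (b - a)) * l⁻¹ := by field_simp
      _ ≤ (2 ^ (1 + 2) + 2 * M * (b - a)) * l ^ (-(1 / ((1 : ℕ) : ℝ))) := by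
        rw [Nat.cast_one, div_one, Real.rpow_neg_one]
        gcongr
        norm_num
  · refine (norm_integral_exp_le_of_le_abs_iteratedDeriv hk2
      (hφ.of_le (mod_cast le_max_left k 2)) hab hl h).trans ?_
    gcongr
    linarith [mul_nonneg (mul_nonneg zero_le_two hM) hlen]

end VanDerCorput

section FiniteType

open Set

variable {V : Type*} [NormedAddCommGroup V] [NormedSpace ℝ V]

/-- The curve `u` is of type at most `A` at `t`: no nonzero linear functional annihilates all of
`u' t, …, u⁽ᴬ⁾ t`. In finite dimension this says that these derivatives span the space. -/
def HasFiniteType (u : ℝ → V) (A : ℕ) (t : ℝ) : Prop :=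
  ∀ θ : V →L[ℝ] ℝ, θ ≠ 0 → ∃ k ∈ Finset.Icc 1 A, θ (iteratedDeriv k u t) ≠ 0

theorem iteratedDeriv_clm_comp {u : ℝ → V} {k : ℕ} (hu : ContDiff ℝ k u) (θ : V →L[ℝ] ℝ) (t : ℝ) :
    iteratedDeriv k (fun s => θ (u s)) t = θ (iteratedDeriv k u t) := by
  rw [iteratedDeriv_eq_iteratedFDeriv, iteratedDeriv_eq_iteratedFDeriv]
  exact DFunLike.congr_fun (θ.iteratedFDeriv_comp_left hu.contDiffAt le_rfl) _

section Compactness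

variable [FiniteDimensional ℝ V] {κ : Type*} [Finite κ]

theorem exists_pos_forall_exists_mul_norm_le_abs {X : Type*} [TopologicalSpace X] {K : Set X}
    (hK : IsCompact K) {v : κ → X → V} (hv : ∀ k, ContinuousOn (v k) K)
    (hspan : ∀ x ∈ K, ∀ θ : V →L[ℝ] ℝ, θ ≠ 0 → ∃ k, θ (v k x) ≠ 0) :
    ∃ c > 0, ∀ x ∈ K, ∀ θ : V →L[ℝ] ℝ, θ ≠ 0 → ∃ k, c * ‖θ‖ ≤ |θ (v k x)| := by
  cases nonempty_fintype κ
  have hS : IsCompact (Metric.sphere (0 : V →L[ℝ] ℝ) 1 ×ˢ K) := (isCompact_sphere 0 1).prod hK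
  have hcont : ContinuousOn (fun p : (V →L[ℝ] ℝ) × X => ‖fun k => p.1 (v k p.2)‖)
      (Metric.sphere 0 1 ×ˢ K) :=
    (continuousOn_pi.2 fun k => continuousOn_fst.clm_apply
      ((hv k).comp continuousOn_snd fun p hp => hp.2)).norm
  have hpos (p : (V →L[ℝ] ℝ) × X) (hp : p ∈ Metric.sphere (0 : V →L[ℝ] ℝ) 1 ×ˢ K) :
      0 < ‖fun k => p.1 (v k p.2)‖ := by
    obtain ⟨k, hk⟩ := hspan p.2 hp.2 p.1 (ne_zero_of_mem_unit_sphere ⟨p.1, hp.1⟩)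
    exact norm_pos_iff.2 fun h0 => hk (congr_fun h0 k)
  obtain ⟨c, hc, hle⟩ := hS.exists_forall_le' hcont hpos
  refine ⟨c, hc, fun x hx θ hθ => ?_⟩
  by_contra! hlt
  have hθ' : 0 < ‖θ‖ := norm_pos_iff.2 hθ
  refine (hle (‖θ‖⁻¹ • θ, x) ⟨by simp [norm_smul, hθ], hx⟩).not_gt
    ((pi_norm_lt_iff hc).2 fun k => ?_)
  rw [smul_apply, norm_smul, norm_inv, norm_norm, inv_mul_lt_iff₀ hθ', mul_comm]
  exact hlt k

theorem exists_pos_forall_exists_locally_mul_norm_le_abs {X : Type*} [PseudoMetricSpace X]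
    {K : Set X} (hK : IsCompact K) {v : κ → X → V} (hv : ∀ k, ContinuousOn (v k) K)
    (hspan : ∀ x ∈ K, ∀ θ : V →L[ℝ] ℝ, θ ≠ 0 → ∃ k, θ (v k x) ≠ 0) :
    ∃ c > 0, ∃ δ > 0, ∀ x ∈ K, ∀ θ : V →L[ℝ] ℝ, θ ≠ 0 →
      ∃ k, ∀ y ∈ K, dist y x ≤ δ → c * ‖θ‖ ≤ |θ (v k y)| := by
  cases nonempty_fintype κ
  obtain ⟨c, hc, hle⟩ := exists_pos_forall_exists_mul_norm_le_abs hK hv hspan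
  obtain ⟨δ, hδ, hunif⟩ := Metric.uniformContinuousOn_iff_le.1
    (hK.uniformContinuousOn_of_continuous (continuousOn_pi.2 hv)) (c / 2) (half_pos hc)
  refine ⟨c / 2, half_pos hc, δ, hδ, fun x hx θ hθ => ?_⟩
  obtain ⟨k, hk⟩ := hle x hx θ hθ
  refine ⟨k, fun y hy hyx => ?_⟩
  have hclose : |θ (v k x) - θ (v k y)| ≤ c / 2 * ‖θ‖ := by
    rw [← map_sub, mul_comm]
    refine θ.le_opNorm_of_le ?_
    rw [← dist_eq_norm, dist_comm]
    exact (dist_le_pi_dist (fun k => v k y) (fun k => v k x) k).trans (hunif y hy x hx hyx)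
  linarith [abs_sub_abs_le_abs_sub (θ (v k x)) (θ (v k y))]

end Compactness

theorem norm_integral_le_mul_of_forall_short {E : Type*} [NormedAddCommGroup E] [NormedSpace ℝ E]
    {f : ℝ → E} {a b δ B : ℝ} {n : ℕ} (hf : Continuous f) (hδ : 0 ≤ δ) (hab : a ≤ b)
    (hn : b - a ≤ n * δ)
    (hshort : ∀ c d, a ≤ c → c ≤ d → d ≤ b → d - c ≤ δ → ‖∫ t in c..d, f t‖ ≤ B) :
    ‖∫ t in a..b, f t‖ ≤ n * B := by
  induction n generalizing b with
  | zero =>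
    obtain rfl : a = b := by
      rw [Nat.cast_zero, zero_mul] at hn
      linarith
    simp
  | succ n ih =>
    push_cast at hn ⊢
    set c := max a (b - δ)
    have hac : a ≤ c := le_max_left ..
    have hcb : c ≤ b := max_le hab (by linarith)
    have hinit : ‖∫ t in a..c, f t‖ ≤ n * B :=
      ih hac (sub_le_iff_le_add.2 (max_le (by linarith [mul_nonneg n.cast_nonneg hδ])
        (by linarith))) fun x y hx hxy hy => hshort x y hx hxy (hy.trans hcb)
    have hlast : ‖∫ t in c..b, f t‖ ≤ B :=
      hshort c b hac hcb le_rfl (by linarith [le_max_right a (b - δ)])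
    rw [← intervalIntegral.integral_add_adjacent_intervals (hf.intervalIntegrable a c)
      (hf.intervalIntegrable c b)]
    exact (norm_add_le _ _).trans (by linarith)

theorem le_mul_rpow_of_le_of_le_mul_rpow {x L C l p q : ℝ} (hL : 0 ≤ L) (hC : 0 ≤ C) (hl : 0 < l)
    (hp : 0 < p) (hpq : p ≤ q) (hxL : x ≤ L) (hxC : x ≤ C * l ^ (-(1 / p))) :
    x ≤ (C + L) * l ^ (-(1 / q)) := by
  have hq : 0 < q := hp.trans_le hpq
  have hpow : 0 < l ^ (-(1 / q)) := Real.rpow_pos_of_pos hl _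
  rcases le_total l 1 with hl1 | hl1
  · have hone : 1 ≤ l ^ (-(1 / q)) :=
      Real.one_le_rpow_of_pos_of_le_one_of_nonpos hl hl1 (by simp [hq.le])
    nlinarith
  · have hmono : l ^ (-(1 / p)) ≤ l ^ (-(1 / q)) :=
      Real.rpow_le_rpow_of_exponent_le hl1 (neg_le_neg (one_div_le_one_div_of_le hp hpq))
    nlinarith

variable [FiniteDimensional ℝ V] {u : ℝ → V} {A : ℕ} {a b γ : ℝ}

theorem exists_iteratedDeriv_bounds_of_hasFiniteType (hA : 2 ≤ A) (hu : ContDiff ℝ A u)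
    (hfin : ∀ t ∈ Icc a b, HasFiniteType u A t) :
    ∃ c > 0, ∃ δ > 0, ∃ M ≥ 0, ∀ θ : V →L[ℝ] ℝ, θ ≠ 0 → ∀ a' b', a ≤ a' → a' ≤ b' → b' ≤ b →
      b' - a' ≤ δ → ∃ k ∈ Finset.Icc 1 A, ∀ t ∈ Icc a' b',
        c * ‖θ‖ ≤ |iteratedDeriv k (fun s => θ (u s)) t| ∧
        |iteratedDeriv 2 (fun s => θ (u s)) t| ≤ M * (c * ‖θ‖) := by
  have hle {k : ℕ} (hk : k ≤ A) : (k : WithTop ℕ∞) ≤ A := mod_cast hk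
  obtain ⟨c, hc, δ, hδ, hlower⟩ := exists_pos_forall_exists_locally_mul_norm_le_abs
    (κ := Finset.Icc 1 A) isCompact_Icc
    (fun k => (hu.continuous_iteratedDeriv k (hle (Finset.mem_Icc.1 k.2).2)).continuousOn)
    (fun t ht θ hθ => by
      obtain ⟨k, hk, hne⟩ := hfin t ht θ hθ
      exact ⟨⟨k, hk⟩, hne⟩)
  obtain ⟨N, hN⟩ := isCompact_Icc.exists_bound_of_continuousOn (s := Icc a b)
    (hu.continuous_iteratedDeriv 2 (hle hA)).continuousOn
  refine ⟨c, hc, δ, hδ, |N| / c, by positivity, fun θ hθ a' b' ha hab hb hlen => ?_⟩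
  have hsub : Icc a' b' ⊆ Icc a b := Icc_subset_Icc ha hb
  obtain ⟨⟨k, hk⟩, hk'⟩ := hlower a' (hsub ⟨le_rfl, hab⟩) θ hθ
  refine ⟨k, hk, fun t ht => ⟨?_, ?_⟩⟩
  · rw [iteratedDeriv_clm_comp (hu.of_le (hle (Finset.mem_Icc.1 hk).2))]
    refine hk' t (hsub ht) ?_
    rw [Real.dist_eq, abs_of_nonneg (sub_nonneg.2 ht.1)]
    linarith [ht.2]
  · rw [iteratedDeriv_clm_comp (hu.of_le (hle hA)), ← mul_assoc, div_mul_cancel₀ _ hc.ne', mul_comm]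
    exact θ.le_opNorm_of_le ((hN t (hsub ht)).trans (le_abs_self N))

theorem exists_norm_integral_exp_le_of_hasFiniteType (hA : 2 ≤ A) (hu : ContDiff ℝ A u)
    (hab : a ≤ b) (hfin : ∀ t ∈ Icc a b, HasFiniteType u A t) (hγ : A ≤ γ) :
    ∃ C : ℝ, ∀ θ : V →L[ℝ] ℝ, θ ≠ 0 → ∀ s ∈ Icc a b,
      ‖∫ t in a..s, Complex.exp (Complex.I * (θ (u t) : ℝ))‖ ≤ C * ‖θ‖ ^ (-(1 / γ)) := by
  obtain ⟨c, hc, δ, hδ, M, hM, hbounds⟩ := exists_iteratedDeriv_bounds_of_hasFiniteType hA hu hfin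
  have hlen : 0 ≤ b - a := sub_nonneg.2 hab
  set C₁ := 2 ^ (A + 2) + 2 * M * (b - a)
  refine ⟨⌈(b - a) / δ⌉₊ * ((C₁ + (b - a)) * c ^ (-(1 / γ))), fun θ hθ s hs => ?_⟩
  have hθu : ContDiff ℝ A fun t => θ (u t) := θ.contDiff.comp hu
  have hl : 0 < c * ‖θ‖ := mul_pos hc (norm_pos_iff.2 hθ)
  have hshort (a' b') (ha : a ≤ a') (hab' : a' ≤ b') (hb : b' ≤ s) (hδ' : b' - a' ≤ δ) :
      ‖∫ t in a'..b', Complex.exp (Complex.I * (θ (u t) : ℝ))‖ ≤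
        (C₁ + (b - a)) * (c * ‖θ‖) ^ (-(1 / γ)) := by
    obtain ⟨k, hk, hder⟩ := hbounds θ hθ a' b' ha hab' (hb.trans hs.2) hδ'
    obtain ⟨hk1, hkA⟩ := Finset.mem_Icc.1 hk
    have hsub : b' - a' ≤ b - a := by linarith [hs.2]
    refine le_mul_rpow_of_le_of_le_mul_rpow hlen (by positivity) hl (p := k) (mod_cast hk1)
      ((Nat.cast_le.2 hkA).trans hγ) ((norm_integral_le_sub
        (fun t => (Complex.norm_exp_I_mul_ofReal _).le) hab').trans hsub) ?_
    refine (norm_integral_exp_le_of_le_abs_iteratedDeriv_of_abs_iteratedDeriv_two_le (by lia)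
      (hθu.of_le (mod_cast max_le hkA hA)) hab' hl hM (fun t ht => (hder t ht).1)
      fun t ht => (hder t ht).2).trans ?_
    simp only [C₁]
    gcongr
    norm_num
  have hcover : s - a ≤ ⌈(b - a) / δ⌉₊ * δ := by
    rw [← div_le_iff₀ hδ]
    exact (by gcongr; exact hs.2 : (s - a) / δ ≤ (b - a) / δ).trans (Nat.le_ceil _)
  rw [mul_assoc, mul_assoc, ← Real.mul_rpow hc.le (norm_nonneg θ)]
  exact norm_integral_le_mul_of_forall_short (by fun_prop) hδ.le hs.1 hcover hshort

theorem exists_norm_integral_smul_exp_le_of_hasFiniteType (hA : 2 ≤ A) (hu : ContDiff ℝ A u)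
    (hab : a ≤ b) (hfin : ∀ t ∈ Icc a b, HasFiniteType u A t) (hγ : A ≤ γ) {ψ : ℝ → ℝ}
    (hψ : ContDiff ℝ 1 ψ) :
    ∃ C : ℝ, ∀ θ : V →L[ℝ] ℝ, θ ≠ 0 →
      ‖∫ t in a..b, ψ t • Complex.exp (Complex.I * (θ (u t) : ℝ))‖ ≤ C * ‖θ‖ ^ (-(1 / γ)) := by
  obtain ⟨C, hC⟩ := exists_norm_integral_exp_le_of_hasFiniteType hA hu hab hfin hγ
  refine ⟨C * (|ψ b| + ∫ t in a..b, |deriv ψ t|), fun θ hθ => ?_⟩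
  have hcont := hu.continuous
  rw [mul_right_comm]
  exact norm_integral_smul_le_of_norm_integral_le hab (by fun_prop)
    (fun t _ => (hψ.differentiable one_ne_zero t).hasDerivAt)
    (hψ.continuous_deriv le_rfl).continuousOn (hC θ hθ)

end FiniteType

section CircleCurve

open Set

theorem exists_iteratedDeriv_ne_zero_of_analyticOrderAt_deriv_lt {f : ℝ → ℝ} {t : ℝ} {A : ℕ}
    (hf : AnalyticAt ℝ f t) (hA : analyticOrderAt (deriv f) t < A) :
    ∃ k ∈ Finset.Icc 1 A, iteratedDeriv k f t ≠ 0 := by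
  contrapose! hA
  rw [natCast_le_analyticOrderAt_iff_iteratedDeriv_eq_zero hf.deriv]
  intro i hi
  rw [← iteratedDeriv_succ']
  exact hA (i + 1) (Finset.mem_Icc.2 ⟨by lia, hi⟩)

theorem analyticOrderAt_mul_mul_add_pow_le {u v : ℝ → ℝ} {t c d : ℝ} {m n : ℕ}
    (hu : AnalyticAt ℝ u t) (hv : AnalyticAt ℝ v t) (hut : u t = 0) (hu' : deriv u t ≠ 0)
    (hvt : v t ≠ 0) (hn : n ≠ 0) (hcd : c ≠ 0 ∨ d ≠ 0) :
    analyticOrderAt (u * v * fun s => c * v s ^ m + d * u s ^ n) t ≤ (n + 1 : ℕ) := by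
  have hord_u : analyticOrderAt u t = 1 := hu.analyticOrderAt_eq_one_of_zero_deriv_ne_zero hut hu'
  have hord_v : analyticOrderAt v t = 0 := hv.analyticOrderAt_eq_zero.2 hvt
  have hg : AnalyticAt ℝ (fun s => c * v s ^ m + d * u s ^ n) t := by fun_prop
  have hord_g : analyticOrderAt (fun s => c * v s ^ m + d * u s ^ n) t ≤ n := by
    by_cases hc : c = 0
    · have hd : d ≠ 0 := hcd.resolve_left (not_not.2 hc)
      have heq : (fun s => c * v s ^ m + d * u s ^ n) = (fun _ => d) * u ^ n := by
        ext s
        simp [hc]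
      rw [heq, analyticOrderAt_mul analyticAt_const (hu.pow n), analyticOrderAt_pow hu, hord_u,
        analyticAt_const.analyticOrderAt_eq_zero.2 hd]
      simp
    · rw [hg.analyticOrderAt_eq_zero.2 (by simp [hut, hn, hc, hvt])]
      exact zero_le
  rw [analyticOrderAt_mul (hu.mul hv) hg, analyticOrderAt_mul hu hv, hord_u, hord_v, add_zero,
    add_comm]
  push_cast
  gcongr

theorem analyticOrderAt_cos_pow_add_sin_pow_le_one {m n : ℕ} {c d t : ℝ} (hs : Real.sin t ≠ 0)
    (hc : Real.cos t ≠ 0) (hcd : c ≠ 0 ∨ d ≠ 0) :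
    analyticOrderAt (fun s => c * Real.cos s ^ (m + 1) + d * Real.sin s ^ (n + 1)) t ≤ 1 := by
  by_contra! hlt
  have hg : AnalyticAt ℝ (fun s => c * Real.cos s ^ (m + 1) + d * Real.sin s ^ (n + 1)) t := by
    fun_prop
  have hvanish := (natCast_le_analyticOrderAt_iff_iteratedDeriv_eq_zero (n := 2) hg).1
    (Order.add_one_le_of_lt hlt)
  have hval : c * Real.cos t ^ (m + 1) + d * Real.sin t ^ (n + 1) = 0 := by
    simpa using hvanish 0 two_pos
  have hder : c * ((m + 1) * Real.cos t ^ m * -Real.sin t) +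
      d * ((n + 1) * Real.sin t ^ n * Real.cos t) = 0 := by
    have h := (((Real.hasDerivAt_cos t).fun_pow (m + 1)).const_mul c).fun_add
      (((Real.hasDerivAt_sin t).fun_pow (n + 1)).const_mul d)
    simpa [h.deriv] using hvanish 1 one_lt_two
  -- Eliminate `d` from the system formed by the value and the derivative.
  have helim : c * Real.cos t ^ (m + 1) *
      ((m + 1) * Real.sin t ^ 2 + (n + 1) * Real.cos t ^ 2) = 0 := by
    linear_combination (n + 1) * Real.cos t ^ 2 * hval - Real.sin t * Real.cos t * hder
  have hc0 : c = 0 := by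
    have hpos : (m + 1) * Real.sin t ^ 2 + (n + 1) * Real.cos t ^ 2 ≠ 0 := by positivity
    simpa [hc, hpos] using helim
  have hd0 : d = 0 := by simpa [hc0, hs] using hval
  exact hcd.elim (· hc0) (· hd0)

theorem deriv_mul_cos_pow_add_mul_sin_pow (p q : ℝ) (m n : ℕ) :
    deriv (fun s => p * Real.cos s ^ (m + 3) + q * Real.sin s ^ (n + 3)) =
      Real.sin * Real.cos * fun s =>
        -(p * (m + 3)) * Real.cos s ^ (m + 1) + q * (n + 3) * Real.sin s ^ (n + 1) := by
  ext s
  have h := (((Real.hasDerivAt_cos s).fun_pow (m + 3)).const_mul p).fun_add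
    (((Real.hasDerivAt_sin s).fun_pow (n + 3)).const_mul q)
  rw [h.deriv]
  simp only [Pi.mul_apply, Nat.cast_add, Nat.cast_ofNat, Nat.reduceSubDiff]
  ring

theorem analyticOrderAt_deriv_mul_cos_pow_add_mul_sin_pow_lt {p q : ℝ} (hpq : p ≠ 0 ∨ q ≠ 0)
    {m n A : ℕ} (hm : m + 3 ≤ A) (hn : n + 3 ≤ A) (t : ℝ) :
    analyticOrderAt (deriv fun s => p * Real.cos s ^ (m + 3) + q * Real.sin s ^ (n + 3)) t < A := by
  have hlt {x : ℕ∞} {j : ℕ} (hx : x ≤ (j + 1 + 1 : ℕ)) (hj : j + 3 ≤ A) : x < A :=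
    hx.trans_lt (mod_cast hj)
  have hcd : -(p * (m + 3)) ≠ 0 ∨ q * (n + 3 : ℝ) ≠ 0 :=
    hpq.imp (fun hp => neg_ne_zero.2 (mul_ne_zero hp (by positivity)))
      fun hq => mul_ne_zero hq (by positivity)
  have hsin : AnalyticAt ℝ Real.sin t := by fun_prop
  have hcos : AnalyticAt ℝ Real.cos t := by fun_prop
  rw [deriv_mul_cos_pow_add_mul_sin_pow]
  by_cases hs : Real.sin t = 0
  · have hc : Real.cos t ≠ 0 := fun hc => by simpa [hs, hc] using Real.sin_sq_add_cos_sq t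
    exact hlt (analyticOrderAt_mul_mul_add_pow_le hsin hcos hs (by simpa using hc) hc
      n.succ_ne_zero hcd) hn
  by_cases hc : Real.cos t = 0
  · refine hlt ?_ hm
    simp only [mul_comm Real.sin, add_comm (_ * Real.cos _ ^ _)]
    exact analyticOrderAt_mul_mul_add_pow_le hcos hsin hc (by simpa using hs) hs
      m.succ_ne_zero hcd.symm
  · rw [analyticOrderAt_mul (hsin.mul hcos) (by fun_prop), analyticOrderAt_mul hsin hcos,
      hsin.analyticOrderAt_eq_zero.2 hs, hcos.analyticOrderAt_eq_zero.2 hc, zero_add, zero_add]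
    exact (analyticOrderAt_cos_pow_add_sin_pow_le_one hs hc hcd).trans_lt
      (mod_cast (by lia : 1 < A))

theorem clm_prod_real_apply (θ : ℝ × ℝ →L[ℝ] ℝ) (x y : ℝ) :
    θ (x, y) = θ (1, 0) * x + θ (0, 1) * y := by
  have h : (x, y) = x • ((1, 0) : ℝ × ℝ) + y • ((0, 1) : ℝ × ℝ) := by simp
  rw [h, map_add, map_smul, map_smul, smul_eq_mul, smul_eq_mul, mul_comm x, mul_comm y]

theorem hasFiniteType_cos_pow_sin_pow {a b A : ℕ} (ha : 3 ≤ a) (hb : 3 ≤ b) (haA : a ≤ A)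
    (hbA : b ≤ A) (t : ℝ) : HasFiniteType (fun s => (Real.cos s ^ a, Real.sin s ^ b)) A t := by
  obtain ⟨m, rfl⟩ := Nat.exists_eq_add_of_le' ha
  obtain ⟨n, rfl⟩ := Nat.exists_eq_add_of_le' hb
  intro θ hθ
  have hne : θ (1, 0) ≠ 0 ∨ θ (0, 1) ≠ 0 := by
    contrapose! hθ
    ext <;> simp [hθ.1, hθ.2]
  obtain ⟨k, hk, hk'⟩ := exists_iteratedDeriv_ne_zero_of_analyticOrderAt_deriv_lt (by fun_prop)
    (analyticOrderAt_deriv_mul_cos_pow_add_mul_sin_pow_lt hne haA hbA t)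
  refine ⟨k, hk, ?_⟩
  rwa [← iteratedDeriv_clm_comp (by fun_prop), funext fun s => clm_prod_real_apply θ _ _]

theorem exists_norm_integral_sin_sq_smul_exp_le {a b : ℕ} (ha : 3 ≤ a) (hb : 3 ≤ b) {γ : ℝ}
    (haγ : a ≤ γ) (hbγ : b ≤ γ) :
    ∃ C ≥ 0, ∀ P Q l : ℝ, 0 < l → l ≤ max |P| |Q| →
      ‖∫ t in (0)..(2 * Real.pi), (Real.sin t ^ 2) •
        Complex.exp (Complex.I * (P * Real.cos t ^ a + Q * Real.sin t ^ b : ℝ))‖ ≤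
          C * l ^ (-(1 / γ)) := by
  obtain ⟨C, hC⟩ := exists_norm_integral_smul_exp_le_of_hasFiniteType (A := max a b)
    (a := 0) (γ := γ) (ψ := fun t => Real.sin t ^ 2) (by lia) (by fun_prop) Real.two_pi_pos.le
    (fun t _ => hasFiniteType_cos_pow_sin_pow ha hb (le_max_left a b) (le_max_right a b) t)
    (by rw [Nat.cast_max]; exact max_le haγ hbγ) (by fun_prop)
  refine ⟨|C|, abs_nonneg C, fun P Q l hl hle => ?_⟩
  set θ : ℝ × ℝ →L[ℝ] ℝ :=
    P • ContinuousLinearMap.fst ℝ ℝ ℝ + Q • ContinuousLinearMap.snd ℝ ℝ ℝ with hθ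
  have hlθ : l ≤ ‖θ‖ := by
    refine hle.trans (max_le ?_ ?_)
    · simpa [hθ] using θ.le_opNorm (1, 0)
    · simpa [hθ] using θ.le_opNorm (0, 1)
  have hγ : 0 < γ := lt_of_lt_of_le (mod_cast (by lia : 0 < a)) haγ
  calc _ ≤ C * ‖θ‖ ^ (-(1 / γ)) := hC θ (norm_pos_iff.1 (hl.trans_le hlθ))
    _ ≤ |C| * l ^ (-(1 / γ)) := by
      refine mul_le_mul (le_abs_self C) (Real.rpow_le_rpow_of_nonpos hl hlθ ?_)
        (by positivity) (abs_nonneg C)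
      simp [hγ.le]

end CircleCurve

section SphereMeasure

open Set Module NormedSpace
open scoped Topology InnerProductSpace

theorem norm_normalize_sub_normalize_le {E : Type*} [NormedAddCommGroup E] [NormedSpace ℝ E]
    {x y : E} (hx : 1 ≤ ‖x‖) : ‖normalize x - normalize y‖ ≤ 2 * ‖x - y‖ := by
  have hinv : ‖x‖⁻¹ ≤ 1 := inv_le_one_of_one_le₀ hx
  have hsplit : normalize x - normalize y = ‖x‖⁻¹ • (x - y + (‖y‖ - ‖x‖) • normalize y) := by
    have hx0 : ‖x‖ ≠ 0 := by positivity
    nth_rw 2 [← norm_smul_normalize y]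
    rw [sub_smul, sub_add_sub_cancel, smul_sub, smul_smul, inv_mul_cancel₀ hx0, one_smul]
    rfl
  have hnormalize : ‖normalize y‖ ≤ 1 := by
    rw [NormedSpace.normalize, norm_smul, norm_inv, norm_norm]
    exact inv_mul_le_one
  calc ‖normalize x - normalize y‖ ≤ 1 * (‖x - y‖ + |‖y‖ - ‖x‖| * 1) := by
        rw [hsplit, norm_smul, norm_inv, norm_norm]
        gcongr
        refine (norm_add_le _ _).trans ?_
        rw [norm_smul, Real.norm_eq_abs]
        gcongr
    _ ≤ 2 * ‖x - y‖ := by linarith [abs_norm_sub_norm_le y x, norm_sub_rev x y]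

variable {E : Type*} [NormedAddCommGroup E] [InnerProductSpace ℝ E] {x : E}

theorem lipschitzWith_normalize_add_orthogonal (hx : ‖x‖ = 1) :
    LipschitzWith 2 fun w : (ℝ ∙ x)ᗮ => normalize (x + (w : E)) := by
  refine LipschitzWith.of_dist_le_mul fun w w' => ?_
  have hnorm : 1 ≤ ‖x + (w : E)‖ := by
    have hpyth := norm_add_sq_eq_norm_sq_add_norm_sq_of_inner_eq_zero x (w : E)
      (Submodule.mem_orthogonal_singleton_iff_inner_right.1 w.2)
    nlinarith [norm_nonneg (x + (w : E)), mul_self_nonneg ‖(w : E)‖]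
  rw [dist_eq_norm, dist_eq_norm]
  refine (norm_normalize_sub_normalize_le hnorm).trans_eq ?_
  simp

theorem sphere_inter_cap_subset_image_normalize (hx : ‖x‖ = 1) :
    Metric.sphere 0 1 ∩ {y | 1 / 2 < ⟪x, y⟫_ℝ} ⊆
      (fun w : (ℝ ∙ x)ᗮ => normalize (x + (w : E))) '' Metric.closedBall 0 3 := by
  rintro y ⟨hy, hxy⟩
  rw [mem_sphere_zero_iff_norm] at hy
  change 1 / 2 < ⟪x, y⟫_ℝ at hxy
  have hpos : 0 < ⟪x, y⟫_ℝ := one_half_pos.trans hxy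
  have horth : (⟪x, y⟫_ℝ)⁻¹ • y - x ∈ (ℝ ∙ x)ᗮ := by
    rw [Submodule.mem_orthogonal_singleton_iff_inner_right, inner_sub_right, real_inner_smul_right,
      real_inner_self_eq_norm_sq, hx, inv_mul_cancel₀ hpos.ne']
    norm_num
  refine ⟨⟨_, horth⟩, mem_closedBall_zero_iff.2 ?_, ?_⟩
  · have hinv : (⟪x, y⟫_ℝ)⁻¹ ≤ 2 := inv_le_of_inv_le₀ two_pos (by linarith)
    refine (norm_sub_le _ _).trans ?_
    rw [norm_smul, norm_inv, Real.norm_of_nonneg hpos.le, hx, hy]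
    linarith
  · simp only [add_sub_cancel]
    rw [normalize_smul_of_pos (inv_pos.2 hpos), normalize_eq_self_of_norm_eq_one hy]

variable [FiniteDimensional ℝ E] [MeasurableSpace E] [BorelSpace E]

theorem hausdorffMeasure_sphere_lt_top :
    μH[(finrank ℝ E : ℝ) - 1] (Metric.sphere (0 : E) 1) < ∞ := by
  refine (isCompact_sphere 0 1).measure_lt_top_of_nhdsWithin fun x hx => ?_
  rw [mem_sphere_zero_iff_norm] at hx
  have hdim : (finrank ℝ E : ℝ) - 1 = finrank ℝ (ℝ ∙ x)ᗮ := by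
    rw [← (ℝ ∙ x).finrank_add_finrank_orthogonal,
      finrank_span_singleton (norm_pos_iff.1 (hx ▸ one_pos))]
    simp
  have hcap : {y | 1 / 2 < ⟪x, y⟫_ℝ} ∈ 𝓝 x := by
    refine (isOpen_lt continuous_const (by fun_prop)).mem_nhds ?_
    norm_num [hx]
  refine ⟨_, inter_mem_nhdsWithin _ hcap, ?_⟩
  rw [hdim]
  calc μH[finrank ℝ (ℝ ∙ x)ᗮ] (Metric.sphere 0 1 ∩ {y | 1 / 2 < ⟪x, y⟫_ℝ})
      ≤ μH[finrank ℝ (ℝ ∙ x)ᗮ]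
          ((fun w : (ℝ ∙ x)ᗮ => normalize (x + (w : E))) '' Metric.closedBall 0 3) :=
        measure_mono (sphere_inter_cap_subset_image_normalize hx)
    _ ≤ _ := (lipschitzWith_normalize_add_orthogonal hx).hausdorffMeasure_image_le
        (Nat.cast_nonneg _) _
    _ < ∞ := ENNReal.mul_lt_top (ENNReal.rpow_lt_top_of_nonneg (Nat.cast_nonneg _) (by simp))
        (isCompact_closedBall _ _).measure_lt_top

end SphereMeasure

section Averaging

theorem integrable_comp_uncurry_of_measurePreserving {X Y E : Type*} [MeasurableSpace X]
    [MeasurableSpace Y] [NormedAddCommGroup E] {μ : Measure Y} [IsFiniteMeasure μ] {ν : Measure X}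
    [SFinite ν] {T : Y → X → X} {f : X → E} (hT : Measurable (Function.uncurry T))
    (hmp : ∀ y, MeasurePreserving (T y) ν ν) (hf : StronglyMeasurable f) (hint : Integrable f ν) :
    Integrable (fun z : Y × X => f (T z.1 z.2)) (μ.prod ν) := by
  have hmeas : StronglyMeasurable fun z : Y × X => f (T z.1 z.2) := hf.comp_measurable hT
  refine (integrable_prod_iff hmeas.aestronglyMeasurable).2 ⟨ae_of_all _ fun y => ?_, ?_⟩
  · exact (hmp y).integrable_comp_of_integrable hint
  · have hconst (y : Y) : ∫ x, ‖f (T y x)‖ ∂ν = ∫ x, ‖f x‖ ∂ν := by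
      rw [← integral_map (f := fun x => ‖f x‖) (hmp y).aemeasurable
        hf.norm.aestronglyMeasurable, (hmp y).map_eq]
    simp only [hconst]
    exact integrable_const _

theorem norm_integral_le_of_norm_integral_orbit_le {X E : Type*} [MeasurableSpace X]
    [NormedAddCommGroup E] [NormedSpace ℝ E] [CompleteSpace E] {ν : Measure X}
    [IsFiniteMeasure ν] {T : ℝ → X → X} {f : X → E} {τ B : ℝ} (hτ : 0 < τ)
    (hT : Measurable (Function.uncurry T)) (hmp : ∀ t, MeasurePreserving (T t) ν ν)
    (hf : StronglyMeasurable f) (hint : Integrable f ν)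
    (hB : ∀ᵐ x ∂ν, ‖∫ t in (0)..τ, f (T t x)‖ ≤ B) :
    ‖∫ x, f x ∂ν‖ ≤ τ⁻¹ * (B * ν.real Set.univ) := by
  have hinvariant (t : ℝ) : ∫ x, f (T t x) ∂ν = ∫ x, f x ∂ν := by
    rw [← integral_map (hmp t).aemeasurable hf.aestronglyMeasurable, (hmp t).map_eq]
  have haverage : ∫ x, (∫ t in (0)..τ, f (T t x)) ∂ν = τ • ∫ x, f x ∂ν := by
    simp only [intervalIntegral.integral_of_le hτ.le]
    rw [← integral_integral_swap (integrable_comp_uncurry_of_measurePreserving hT hmp hf hint)]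
    simp [hinvariant, hτ.le]
  have hnorm := norm_integral_le_of_norm_le_const hB
  rw [haverage, norm_smul, Real.norm_of_nonneg hτ.le] at hnorm
  rwa [le_inv_mul_iff₀ hτ]

end Averaging

section PlaneRotation

variable {ι : Type*} [Fintype ι]

open Classical in
/-- The rotation by the angle `t` in the plane spanned by the coordinate axes `p` and `q`. -/
noncomputable def planeRotation {p q : ι} (hpq : p ≠ q) (t : ℝ) :
    EuclideanSpace ℝ ι →ₗᵢ[ℝ] EuclideanSpace ℝ ι where
  toFun x := WithLp.toLp 2 fun i =>
    if i = p then Real.cos t * x p - Real.sin t * x q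
    else if i = q then Real.sin t * x p + Real.cos t * x q
    else x i
  map_add' x y := by
    ext i
    simp only [PiLp.add_apply]
    split_ifs <;> ring
  map_smul' c x := by
    ext i
    simp only [PiLp.smul_apply, smul_eq_mul, RingHom.id_apply]
    split_ifs <;> ring
  norm_map' x := by
    rw [← sq_eq_sq₀ (norm_nonneg _) (norm_nonneg _), EuclideanSpace.real_norm_sq_eq,
      EuclideanSpace.real_norm_sq_eq, ← Finset.sum_add_sum_compl {p, q},
      ← Finset.sum_add_sum_compl {p, q}, Finset.sum_pair hpq, Finset.sum_pair hpq]
    congr 1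
    · simp only [LinearMap.coe_mk, AddHom.coe_mk, if_true, if_neg hpq.symm]
      linear_combination (x p ^ 2 + x q ^ 2) * Real.sin_sq_add_cos_sq t
    · refine Finset.sum_congr rfl fun i hi => ?_
      simp_all

variable {p q : ι} (hpq : p ≠ q) (t : ℝ) (x : EuclideanSpace ℝ ι)

theorem planeRotation_apply_fst :
    planeRotation hpq t x p = Real.cos t * x p - Real.sin t * x q := by
  simp [planeRotation]

theorem planeRotation_apply_snd :
    planeRotation hpq t x q = Real.sin t * x p + Real.cos t * x q := by
  simp [planeRotation, hpq.symm]

theorem planeRotation_apply_of_ne {i : ι} (hip : i ≠ p) (hiq : i ≠ q) :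
    planeRotation hpq t x i = x i := by
  simp [planeRotation, hip, hiq]

theorem continuous_uncurry_planeRotation :
    Continuous (Function.uncurry fun t x => planeRotation hpq t x) := by
  refine (PiLp.continuous_toLp 2 _).comp (continuous_pi fun i => ?_)
  split_ifs <;> fun_prop

end PlaneRotation

theorem measurePreserving_restrict_sphere {E : Type*} [NormedAddCommGroup E] [NormedSpace ℝ E]
    [FiniteDimensional ℝ E] [MeasurableSpace E] [BorelSpace E] (R : E →ₗᵢ[ℝ] E) (d ρ : ℝ) :
    MeasurePreserving R (μH[d].restrict (Metric.sphere 0 ρ))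
      (μH[d].restrict (Metric.sphere 0 ρ)) := by
  have hpre : R ⁻¹' Metric.sphere 0 ρ = Metric.sphere 0 ρ := by
    ext x
    simp
  have hmp : MeasurePreserving R μH[d] μH[d] :=
    (R.toLinearIsometryEquiv rfl).toIsometryEquiv.measurePreserving_hausdorffMeasure d
  have hrestrict := hmp.restrict_preimage
    (Metric.isClosed_sphere.measurableSet : MeasurableSet (Metric.sphere (0 : E) ρ))
  rwa [hpre] at hrestrict

section SphereDecay

open Set

theorem exists_norm_integral_circle_le {a b : ℕ} (ha : 3 ≤ a) (hb : 3 ≤ b) {γ : ℝ}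
    (haγ : a ≤ γ) (hbγ : b ≤ γ) :
    ∃ C : ℝ, ∀ r ∈ Icc (0 : ℝ) 1, ∀ P Q l : ℝ, 0 < l → l ≤ max |P| |Q| →
      ‖∫ t in (0)..(2 * Real.pi), ((r * Real.sin t) ^ 2) •
        Complex.exp (Complex.I * (P * (r * Real.cos t) ^ a + Q * (r * Real.sin t) ^ b : ℝ))‖ ≤
          C * l ^ (-(1 / γ)) := by
  obtain ⟨C, hC0, hC⟩ := exists_norm_integral_sin_sq_smul_exp_le ha hb haγ hbγ
  refine ⟨C, fun r ⟨hr0, hr1⟩ P Q l hl hle => ?_⟩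
  rcases hr0.eq_or_lt with rfl | hr
  · simp only [zero_mul, ne_eq, OfNat.ofNat_ne_zero, not_false_eq_true, zero_pow, zero_smul,
      intervalIntegral.integral_zero, norm_zero]
    positivity
  have hγ : γ ≠ 0 := (lt_of_lt_of_le (mod_cast (by lia : 0 < a)) haγ).ne'
  have hrγ {k : ℕ} (hk : k ≤ γ) : r ^ γ ≤ r ^ k := by
    rw [← Real.rpow_natCast]
    exact Real.rpow_le_rpow_of_exponent_ge hr hr1 hk
  have hlr : l * r ^ γ ≤ max |P * r ^ a| |Q * r ^ b| := by
    simp only [abs_mul, abs_of_pos (pow_pos hr _)]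
    rcases le_max_iff.1 hle with h | h
    · exact le_max_of_le_left (mul_le_mul h (hrγ haγ) (by positivity) (abs_nonneg P))
    · exact le_max_of_le_right (mul_le_mul h (hrγ hbγ) (by positivity) (abs_nonneg Q))
  have hrescale := hC (P * r ^ a) (Q * r ^ b) (l * r ^ γ) (by positivity) hlr
  simp only [mul_pow, ← mul_assoc, mul_smul, intervalIntegral.integral_smul, norm_smul, norm_pow,
    Real.norm_of_nonneg hr0]
  -- The amplitude contributes `r ^ 2`, which beats the loss `r⁻¹` in the decay.
  calc r ^ 2 * _ ≤ r ^ 2 * (C * (l * r ^ γ) ^ (-(1 / γ))) := by gcongr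
    _ = r * (C * l ^ (-(1 / γ))) := by
      rw [Real.mul_rpow hl.le (by positivity), ← Real.rpow_mul hr0,
        show γ * -(1 / γ) = -1 by field_simp, Real.rpow_neg_one]
      field_simp
    _ ≤ C * l ^ (-(1 / γ)) := mul_le_of_le_one_left (by positivity) hr1

variable {ι : Type*} [Fintype ι]

/-- The phase `∑ j, x j ^ α j * l j` of the oscillatory integrals over the sphere, with exponents
`α` and frequencies `l`. -/
def diagonalPhase (α : ι → ℕ) (l : ι → ℝ) (x : EuclideanSpace ℝ ι) : ℝ :=
  ∑ j, x j ^ α j * l j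

theorem continuous_diagonalPhase (α : ι → ℕ) (l : ι → ℝ) : Continuous (diagonalPhase α l) := by
  unfold diagonalPhase
  fun_prop

theorem exists_planeRotation_eq_mul_cos_mul_sin {p q : ι} (hpq : p ≠ q)
    (x : EuclideanSpace ℝ ι) :
    ∃ r s : ℝ, 0 ≤ r ∧ r ≤ ‖x‖ ∧ ∀ t,
      planeRotation hpq t x p = r * Real.cos (t + s) ∧
        planeRotation hpq t x q = r * Real.sin (t + s) := by
  classical
  set w : ℂ := ⟨x p, x q⟩
  have hcos : ‖w‖ * Real.cos w.arg = x p := Complex.norm_mul_cos_arg w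
  have hsin : ‖w‖ * Real.sin w.arg = x q := Complex.norm_mul_sin_arg w
  have hle : ‖w‖ ≤ ‖x‖ := by
    rw [← sq_le_sq₀ (norm_nonneg _) (norm_nonneg _), EuclideanSpace.real_norm_sq_eq,
      Complex.sq_norm, Complex.normSq_mk, ← sq, ← sq, ← Finset.sum_pair (f := fun i => x i ^ 2) hpq]
    exact Finset.sum_le_univ_sum_of_nonneg fun i => sq_nonneg _
  refine ⟨‖w‖, w.arg, norm_nonneg w, hle, fun t => ⟨?_, ?_⟩⟩
  · rw [planeRotation_apply_fst, ← hcos, ← hsin, Real.cos_add]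
    ring
  · rw [planeRotation_apply_snd, ← hcos, ← hsin, Real.sin_add]
    ring

theorem exists_diagonalPhase_planeRotation_eq {p q : ι} (hpq : p ≠ q) (α : ι → ℕ) (l : ι → ℝ)
    (x : EuclideanSpace ℝ ι) :
    ∃ c : ℝ, ∀ t, diagonalPhase α l (planeRotation hpq t x) =
      c + (l p * planeRotation hpq t x p ^ α p + l q * planeRotation hpq t x q ^ α q) := by
  classical
  refine ⟨∑ j ∈ {p, q}ᶜ, x j ^ α j * l j, fun t => ?_⟩
  have hfixed : ∑ j ∈ {p, q}ᶜ, planeRotation hpq t x j ^ α j * l j =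
      ∑ j ∈ {p, q}ᶜ, x j ^ α j * l j := by
    refine Finset.sum_congr rfl fun j hj => ?_
    simp only [Finset.mem_compl, Finset.mem_insert, Finset.mem_singleton, not_or] at hj
    rw [planeRotation_apply_of_ne hpq t x hj.1 hj.2]
  rw [diagonalPhase, ← Finset.sum_add_sum_compl {p, q}, Finset.sum_pair hpq, hfixed]
  ring

variable {α : ι → ℕ} {γ : ℝ}

theorem exists_norm_integral_orbit_le {p q : ι} (hpq : p ≠ q) (hp : 3 ≤ α p) (hq : 3 ≤ α q)
    (hpγ : α p ≤ γ) (hqγ : α q ≤ γ) :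
    ∃ C : ℝ, ∀ x : EuclideanSpace ℝ ι, ‖x‖ = 1 → ∀ (l : ι → ℝ) (δ : ℝ), 0 < δ →
      δ ≤ max |l p| |l q| →
        ‖∫ t in (0)..(2 * Real.pi), (planeRotation hpq t x q ^ 2) •
          Complex.exp (Complex.I * diagonalPhase α l (planeRotation hpq t x))‖ ≤
            C * δ ^ (-(1 / γ)) := by
  obtain ⟨C, hC⟩ := exists_norm_integral_circle_le hp hq hpγ hqγ
  refine ⟨C, fun x hx l δ hδ hle => ?_⟩
  obtain ⟨r, s, hr0, hr1, hpolar⟩ := exists_planeRotation_eq_mul_cos_mul_sin hpq x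
  obtain ⟨c, hc⟩ := exists_diagonalPhase_planeRotation_eq hpq α l x
  set g : ℝ → ℂ := fun t => ((r * Real.sin t) ^ 2) • Complex.exp
    (Complex.I * (l p * (r * Real.cos t) ^ α p + l q * (r * Real.sin t) ^ α q : ℝ)) with hg
  have horbit (t : ℝ) : (planeRotation hpq t x q ^ 2) •
      Complex.exp (Complex.I * diagonalPhase α l (planeRotation hpq t x)) =
        Complex.exp (Complex.I * c) * g (t + s) := by
    rw [hc, (hpolar t).1, (hpolar t).2, Complex.ofReal_add, mul_add, Complex.exp_add,
      mul_smul_comm]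
  have hperiodic : Function.Periodic g (2 * Real.pi) := fun t => by
    simp only [hg, Real.sin_periodic t, Real.cos_periodic t]
  have hshift : ∫ t in (0)..(2 * Real.pi), g (t + s) = ∫ t in (0)..(2 * Real.pi), g t := by
    rw [intervalIntegral.integral_comp_add_right, zero_add, add_comm,
      hperiodic.intervalIntegral_add_eq s 0, zero_add]
  simp only [horbit, intervalIntegral.integral_const_mul, norm_mul,
    Complex.norm_exp_I_mul_ofReal, one_mul, hshift]
  exact hC r ⟨hr0, hx ▸ hr1⟩ (l p) (l q) δ hδ hle

/-- The surface measure of the unit sphere, as the restriction of the Hausdorff measure of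
codimension one. -/
noncomputable def sphereMeasure (ι : Type*) [Fintype ι] : Measure (EuclideanSpace ℝ ι) :=
  μH[(Fintype.card ι : ℝ) - 1].restrict (Metric.sphere 0 1)

instance : IsFiniteMeasure (sphereMeasure ι) := by
  rw [sphereMeasure, isFiniteMeasure_restrict, ← finrank_euclideanSpace (𝕜 := ℝ) (ι := ι)]
  exact hausdorffMeasure_sphere_lt_top.ne

theorem ae_sphereMeasure_norm_eq_one : ∀ᵐ x ∂sphereMeasure ι, ‖x‖ = 1 := by
  filter_upwards [ae_restrict_mem Metric.isClosed_sphere.measurableSet] with x hx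
  exact mem_sphere_zero_iff_norm.1 hx

theorem integrable_sq_smul_exp_diagonalPhase (α : ι → ℕ) (l : ι → ℝ) (i : ι) :
    Integrable (fun x => (x i ^ 2) • Complex.exp (Complex.I * diagonalPhase α l x))
      (sphereMeasure ι) := by
  have hcont := continuous_diagonalPhase α l
  refine Integrable.of_bound (Continuous.aestronglyMeasurable (by fun_prop)) 1 ?_
  filter_upwards [ae_sphereMeasure_norm_eq_one] with x hx
  rw [norm_smul, Complex.norm_exp_I_mul_ofReal, mul_one, norm_pow]
  exact pow_le_one₀ (norm_nonneg _) (hx ▸ PiLp.norm_apply_le x i)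

theorem exists_norm_integral_sq_smul_exp_le_of_le_max {p q : ι} (hpq : p ≠ q) (hp : 3 ≤ α p)
    (hq : 3 ≤ α q) (hpγ : α p ≤ γ) (hqγ : α q ≤ γ) :
    ∃ C : ℝ, ∀ (l : ι → ℝ) (δ : ℝ), 0 < δ → δ ≤ max |l p| |l q| →
      ‖∫ x, (x q ^ 2) • Complex.exp (Complex.I * diagonalPhase α l x) ∂sphereMeasure ι‖ ≤
        C * δ ^ (-(1 / γ)) := by
  obtain ⟨C, hC⟩ := exists_norm_integral_orbit_le hpq hp hq hpγ hqγ
  refine ⟨(2 * Real.pi)⁻¹ * (C * (sphereMeasure ι).real univ), fun l δ hδ hle => ?_⟩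
  have hcont := continuous_diagonalPhase α l
  have hinvariant (t : ℝ) :
      MeasurePreserving (planeRotation hpq t) (sphereMeasure ι) (sphereMeasure ι) :=
    measurePreserving_restrict_sphere (planeRotation hpq t) _ 1
  have haverage := norm_integral_le_of_norm_integral_orbit_le Real.two_pi_pos
    (continuous_uncurry_planeRotation hpq).measurable hinvariant
    (Continuous.stronglyMeasurable (by fun_prop)) (integrable_sq_smul_exp_diagonalPhase α l q)
    (ae_sphereMeasure_norm_eq_one.mono fun x hx => hC x hx l δ hδ hle)
  refine haverage.trans_eq ?_
  ring

variable [Nontrivial ι]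

theorem exists_norm_integral_sq_smul_exp_le (hα : ∀ j, 3 ≤ α j) (hγ : ∀ j, α j ≤ γ)
    (i j : ι) :
    ∃ C : ℝ, ∀ l : ι → ℝ, l j ≠ 0 →
      ‖∫ x, (x i ^ 2) • Complex.exp (Complex.I * diagonalPhase α l x) ∂sphereMeasure ι‖ ≤
        C * |l j| ^ (-(1 / γ)) := by
  obtain ⟨p, hp, hj⟩ : ∃ p ≠ i, j = p ∨ j = i := by
    by_cases hji : j = i
    · obtain ⟨p, hp⟩ := exists_ne i
      exact ⟨p, hp, .inr hji⟩
    · exact ⟨j, hji, .inl rfl⟩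
  obtain ⟨C, hC⟩ :=
    exists_norm_integral_sq_smul_exp_le_of_le_max hp (hα p) (hα i) (hγ p) (hγ i)
  refine ⟨C, fun l hl => hC l |l j| (abs_pos.2 hl) ?_⟩
  rcases hj with rfl | rfl
  exacts [le_max_left _ _, le_max_right _ _]

theorem exists_norm_integral_exp_diagonalPhase_le_of_ne_zero (hα : ∀ j, 3 ≤ α j)
    (hγ : ∀ j, α j ≤ γ) (j : ι) :
    ∃ C : ℝ, ∀ l : ι → ℝ, l j ≠ 0 →
      ‖∫ x, Complex.exp (Complex.I * diagonalPhase α l x) ∂sphereMeasure ι‖ ≤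
        C * |l j| ^ (-(1 / γ)) := by
  choose C hC using fun i => exists_norm_integral_sq_smul_exp_le hα hγ i j
  refine ⟨∑ i, C i, fun l hl => ?_⟩
  have hpartition : ∫ x, Complex.exp (Complex.I * diagonalPhase α l x) ∂sphereMeasure ι =
      ∑ i, ∫ x, (x i ^ 2) • Complex.exp (Complex.I * diagonalPhase α l x) ∂sphereMeasure ι := by
    rw [← integral_finsetSum _ fun i _ => integrable_sq_smul_exp_diagonalPhase α l i]
    refine integral_congr_ae (ae_sphereMeasure_norm_eq_one.mono fun x hx => ?_)
    simp only
    rw [← Finset.sum_smul, ← EuclideanSpace.real_norm_sq_eq, hx, one_pow, one_smul]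
  rw [hpartition, Finset.sum_mul]
  exact norm_sum_le_of_le _ fun i _ => hC i l hl

theorem exists_norm_integral_exp_diagonalPhase_le (hα : ∀ j, 3 ≤ α j) (hγ : ∀ j, α j ≤ γ) :
    ∃ C ≥ 0, ∀ l : ι → ℝ, l ≠ 0 →
      ‖∫ x, Complex.exp (Complex.I * diagonalPhase α l x) ∂sphereMeasure ι‖ ≤
        C * ‖l‖ ^ (-(1 / γ)) := by
  choose C hC using exists_norm_integral_exp_diagonalPhase_le_of_ne_zero hα hγ
  refine ⟨∑ j, |C j|, by positivity, fun l hl => ?_⟩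
  obtain ⟨j, hmax⟩ := Finite.exists_max fun j => |l j|
  have hj : ‖l‖ = |l j| := le_antisymm ((pi_norm_le_iff_of_nonempty l).2 hmax) (norm_le_pi_norm l j)
  have hlj : l j ≠ 0 := abs_pos.1 (hj ▸ norm_pos_iff.2 hl)
  rw [hj]
  refine (hC j l hlj).trans (mul_le_mul_of_nonneg_right ?_ (by positivity))
  exact (le_abs_self _).trans (Finset.single_le_sum (f := fun j => |C j|)
    (fun _ _ => abs_nonneg _) (Finset.mem_univ j))

end SphereDecay

theorem abs_sum_abs_pow_sub_sum_abs_pow_le {ι : Type*} [Fintype ι] (y z : ι → ℝ) (m : ℕ) :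
    |∑ i, |y i| ^ m - ∑ i, |z i| ^ m| ≤ Fintype.card ι * ‖fun i => y i ^ m - z i ^ m‖ := by
  rw [← Finset.sum_sub_distrib, ← nsmul_eq_mul]
  refine (Finset.abs_sum_le_sum_abs _ _).trans (Finset.sum_le_card_nsmul _ _ _ fun i _ => ?_)
  rw [← abs_pow, ← abs_pow]
  exact (abs_abs_sub_abs_le_abs_sub _ _).trans (norm_le_pi_norm (fun i => y i ^ m - z i ^ m) i)

theorem sphere_kernel_estimate_general {ι : Type*} [Fintype ι] [Nontrivial ι] {α : ι → ℕ}
    (hα : ∀ j, 3 ≤ α j) (m : ℕ) {γ : ℝ} (hγ : ∀ j, α j ≤ γ) :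
    ∃ C : ℝ, ∀ y z : EuclideanSpace ℝ ι,
      (∑ i, |y i| ^ m) ≠ (∑ i, |z i| ^ m) →
      ‖∫ x in Metric.sphere (0 : EuclideanSpace ℝ ι) 1,
          Complex.exp (Complex.I *
            Complex.ofReal (∑ j, (x j) ^ (α j) * ((y j) ^ m - (z j) ^ m)))
            ∂(μH[(Fintype.card ι : ℝ) - 1])‖
        ≤ C * |(∑ i, |y i| ^ m) - ∑ i, |z i| ^ m| ^ (-(1 / γ)) := by
  obtain ⟨C, hC0, hC⟩ := exists_norm_integral_exp_diagonalPhase_le hα hγ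
  refine ⟨C * ((Fintype.card ι : ℝ)⁻¹) ^ (-(1 / γ)), fun y z hyz => ?_⟩
  set l : ι → ℝ := fun i => y i ^ m - z i ^ m
  set D := |∑ i, |y i| ^ m - ∑ i, |z i| ^ m|
  have hD : 0 < D := abs_pos.2 (sub_ne_zero.2 hyz)
  have hcard : (0 : ℝ) < Fintype.card ι := mod_cast Fintype.card_pos
  have hDl : (Fintype.card ι : ℝ)⁻¹ * D ≤ ‖l‖ :=
    (inv_mul_le_iff₀ hcard).2 (abs_sum_abs_pow_sub_sum_abs_pow_le y z m)
  have hl : l ≠ 0 := norm_pos_iff.1 (lt_of_lt_of_le (by positivity) hDl)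
  have hγ0 : 0 ≤ γ := (Nat.cast_nonneg _).trans (hγ (Classical.arbitrary ι))
  calc _ ≤ C * ‖l‖ ^ (-(1 / γ)) := hC l hl
    _ ≤ C * ((Fintype.card ι : ℝ)⁻¹ * D) ^ (-(1 / γ)) := by
      gcongr C * ?_
      exact Real.rpow_le_rpow_of_nonpos (by positivity) hDl (by simpa using hγ0)
    _ = _ := by rw [Real.mul_rpow (by positivity) hD.le, mul_assoc]

/-- Kernel estimate: for `γ ≥ α_max`,
`|∫_{𝕊^{n-1}} e^{i ∑ xⱼ^{αⱼ}(yⱼ^m - zⱼ^m)} dσ(x)| ≤ C |‖y‖ₘᵐ - ‖z‖ₘᵐ|^{-1/γ}`. -/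
theorem sphere_kernel_estimate (n : ℕ) (hn : 2 ≤ n) (α : Fin n → ℕ)
    (hα : ∀ j, 3 ≤ α j) (αmax : ℕ) (hαmax : αmax = Finset.univ.sup α)
    (m : ℕ) (hm : 3 ≤ m) (γ : ℝ) (hγ : (αmax : ℝ) ≤ γ) :
    ∃ C : ℝ, ∀ y z : EuclideanSpace ℝ (Fin n),
      (∑ i, |y i| ^ m) ≠ (∑ i, |z i| ^ m) →
      ‖∫ x in Metric.sphere (0 : EuclideanSpace ℝ (Fin n)) 1,
          Complex.exp (Complex.I *
            Complex.ofReal (∑ j, (x j) ^ (α j) * ((y j) ^ m - (z j) ^ m)))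
            ∂(μH[(n : ℝ) - 1])‖
        ≤ C * |(∑ i, |y i| ^ m) - ∑ i, |z i| ^ m| ^ (-(1 / γ)) := by
  have : Nontrivial (Fin n) := Fin.nontrivial_iff_two_le.2 hn
  simpa only [Fintype.card_fin] using sphere_kernel_estimate_general hα m fun j =>
    (Nat.cast_le.2 (hαmax ▸ Finset.le_sup (Finset.mem_univ j))).trans hγ
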